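/- Let a, Θ ∈ M₃(ℝ) be skew-symmetric, φ, Ξ ∈ ℝ³, and λ ∈ ℝ with λ ≠ 2 and λ ≠ −1. If (λ−1)·a = Θ − E(φ) and λ·φ = −Γ(a) + Ξ, then a = (1/(λ²−λ−2))·(λ·Θ − E(Ξ)) and φ = (1/(λ²−λ−2))·((λ−1)·Ξ − Γ(Θ)). In particular, if Θ = 0 and Ξ = 0 then a = 0 and φ = 0. -/

import Mathlib

open Matrix

/-- The space of 3×3 real matrices. -/
abbrev M3 := Matrix (Fin 3) (Fin 3) ℝ

/-- The Levi–Civita symbol on `Fin 3`. -/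
noncomputable def eps (i j k : Fin 3) : ℝ :=
  (((j : ℕ) : ℝ) - ((i : ℕ) : ℝ)) * (((k : ℕ) : ℝ) - ((i : ℕ) : ℝ)) *
    (((k : ℕ) : ℝ) - ((j : ℕ) : ℝ)) / 2

/-- The map `Γ : M₃(ℝ) → ℝ³`, `Γ(a)_l = Σ_{i,k} ε_{ikl} a_{ik}`. -/
noncomputable def Gam (a : M3) : Fin 3 → ℝ := fun l => ∑ i, ∑ k, eps i k l * a i k

/-- The map `E : ℝ³ → M₃(ℝ)`, `E(c)_{li} = Σ_k ε_{kli} c_k`. -/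
noncomputable def Emap (c : Fin 3 → ℝ) : M3 := fun l i => ∑ k, eps k l i * c k

/-!
On skew-symmetric matrices `Gam` and `Emap` are, up to the factor `2`, mutually inverse: this is the
contraction identity `∑ₖ εᵢⱼₖ εₖₗₘ = δᵢₗ δⱼₘ - δᵢₘ δⱼₗ`. The two equations therefore form a linear
system for `(a, φ)` with determinant `λ(λ - 1) - 2 = (λ - 2)(λ + 1)`, and applying `Emap` to
the second equation, respectively `Gam` to the first, eliminates one unknown.
-/

/-- `Gam` as an `ℝ`-linear map, the form in which the elimination lemma takes it. -/
noncomputable def gamLinearMap : M3 →ₗ[ℝ] Fin 3 → ℝ where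
  toFun := Gam
  map_add' a b := by
    ext l
    simp [Gam, mul_add, Finset.sum_add_distrib]
  map_smul' r a := by
    ext l
    simp [Gam, Finset.mul_sum, mul_left_comm]

/-- `Emap` as an `ℝ`-linear map, the form in which the elimination lemma takes it. -/
noncomputable def emapLinearMap : (Fin 3 → ℝ) →ₗ[ℝ] M3 where
  toFun := Emap
  map_add' c d := by
    ext l i
    simp [Emap, mul_add, Finset.sum_add_distrib]
  map_smul' r c := by
    ext l i
    simp [Emap, Finset.mul_sum, mul_left_comm]

theorem eps_cyclic (i j k : Fin 3) : eps i j k = eps j k i := by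
  unfold eps
  ring

theorem sum_eps_mul_eps (i j l m : Fin 3) :
    ∑ k, eps i j k * eps k l m =
      (1 : M3) i l * (1 : M3) j m - (1 : M3) i m * (1 : M3) j l := by
  fin_cases i <;> fin_cases j <;> fin_cases l <;> fin_cases m <;>
    norm_num [eps, Fin.sum_univ_three, one_apply]

theorem sum_sum_eps_mul_eps (k l : Fin 3) :
    ∑ i, ∑ j, eps i j k * eps l i j = 2 * (1 : M3) k l := by
  calc ∑ i, ∑ j, eps i j k * eps l i j
      = ∑ i, ∑ j, eps k i j * eps j l i := by simp only [eps_cyclic k, eps_cyclic _ l]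
    _ = ∑ i, ((1 : M3) k l * (1 : M3) i i - (1 : M3) k i * (1 : M3) i l) := by
        simp only [sum_eps_mul_eps]
    _ = 3 * (1 : M3) k l - (1 * 1 : M3) k l := by
        simp [Finset.sum_sub_distrib, mul_apply]
    _ = 2 * (1 : M3) k l := by
        rw [one_mul]
        ring

theorem Emap_Gam (a : M3) : Emap (Gam a) = a - aᵀ := by
  ext l i
  calc Emap (Gam a) l i
      = ∑ m, ∑ n, (∑ k, eps m n k * eps k l i) * a m n := by
        simp only [Emap, Gam, Finset.mul_sum, Finset.sum_mul]
        rw [Finset.sum_comm]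
        refine Finset.sum_congr rfl fun m _ => ?_
        rw [Finset.sum_comm]
        refine Finset.sum_congr rfl fun n _ => Finset.sum_congr rfl fun k _ => ?_
        ring
    _ = (a - aᵀ) l i := by
        simp [sum_eps_mul_eps, one_apply, sub_mul, Finset.sum_sub_distrib]

theorem Gam_Emap (c : Fin 3 → ℝ) : Gam (Emap c) = (2 : ℝ) • c := by
  ext l
  calc Gam (Emap c) l
      = ∑ m, (∑ i, ∑ k, eps i k l * eps m i k) * c m := by
        simp only [Gam, Emap, Finset.mul_sum, Finset.sum_mul, ← mul_assoc]
        rw [Finset.sum_comm_cycle]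
    _ = ((2 : ℝ) • c) l := by
        simp [sum_sum_eps_mul_eps, one_apply]

theorem mul_sub_smul_eq_of_smul_eq_sub {R V W : Type*} [CommRing R]
    [AddCommGroup V] [Module R V] [AddCommGroup W] [Module R W]
    (f : V →ₗ[R] W) (g : W →ₗ[R] V) {p q μ : R} {x b : V} {y c : W}
    (hx : p • x = b - g y) (hy : q • y = c - f x) (hgf : g (f x) = μ • x) :
    (p * q - μ) • x = q • b - g c := by
  calc (p * q - μ) • x
      = q • p • x - g (f x) := by rw [sub_smul, mul_comm, mul_smul, hgf]
    _ = q • b - g (q • y + f x) := by rw [hx, smul_sub, map_add, map_smul, sub_sub]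
    _ = q • b - g c := by rw [hy, sub_add_cancel]

theorem vanishing_lemma_two (a Θ : M3) (ha : aᵀ = -a) (hΘ : Θᵀ = -Θ)
    (φ Ξ : Fin 3 → ℝ) (lam : ℝ) (hlam2 : lam ≠ 2) (hlam1 : lam ≠ -1)
    (h1 : (lam - 1) • a = Θ - Emap φ)
    (h2 : lam • φ = -Gam a + Ξ) :
    a = (1 / (lam ^ 2 - lam - 2)) • (lam • Θ - Emap Ξ) ∧
    φ = (1 / (lam ^ 2 - lam - 2)) • ((lam - 1) • Ξ - Gam Θ) ∧
    (Θ = 0 → Ξ = 0 → a = 0 ∧ φ = 0) := by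
  have hdet : lam ^ 2 - lam - 2 ≠ 0 := by
    have hfactor : lam ^ 2 - lam - 2 = (lam - 2) * (lam - -1) := by ring
    rw [hfactor]
    exact mul_ne_zero (sub_ne_zero.2 hlam2) (sub_ne_zero.2 hlam1)
  have hEΓ : Emap (Gam a) = (2 : ℝ) • a := by rw [Emap_Gam, ha, sub_neg_eq_add, two_smul]
  have h2' : lam • φ = Ξ - Gam a := by rw [h2, neg_add_eq_sub]
  have a_eq : a = (1 / (lam ^ 2 - lam - 2)) • (lam • Θ - Emap Ξ) := by
    rw [one_div, eq_inv_smul_iff₀ hdet, show lam ^ 2 - lam - 2 = (lam - 1) * lam - 2 by ring]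
    exact mul_sub_smul_eq_of_smul_eq_sub gamLinearMap emapLinearMap h1 h2' hEΓ
  have φ_eq : φ = (1 / (lam ^ 2 - lam - 2)) • ((lam - 1) • Ξ - Gam Θ) := by
    rw [one_div, eq_inv_smul_iff₀ hdet, show lam ^ 2 - lam - 2 = lam * (lam - 1) - 2 by ring]
    exact mul_sub_smul_eq_of_smul_eq_sub emapLinearMap gamLinearMap h2' h1 (Gam_Emap φ)
  refine ⟨a_eq, φ_eq, ?_⟩
  rintro rfl rfl
  have hE0 : Emap 0 = 0 := map_zero emapLinearMap
  have hΓ0 : Gam 0 = 0 := map_zero gamLinearMap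
  exact ⟨by simpa [hE0] using a_eq, by simpa [hΓ0] using φ_eq⟩
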